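/- Under hypothesis (1.0), the ND principal eigenvalue λ₀ (defined via compactly supported test functions) equals λ̃₀ := inf{ D(f) : μ(f²) = 1, f ∈ C¹(0,D) ∩ C[0,D], and f(D) = 0 }, where f(D) is interpreted as lim_{x→D} f(x) in the case D = ∞. -/

import Mathlib

/-!
The inequality `lam0til ≤ lam0` holds because a compactly supported test function vanishes at `D`.

For the converse, a test function `f` vanishing at `D` is truncated in its *values* rather than in
the space variable.  Let `trunc N` be the `C¹` primitive of a weight with values in `[0, 1]` that
vanishes on `|s| ≤ 1 / N` and tends pointwise to `1` off `0`.  Since `f` is small near `D`, the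
composition `trunc N ∘ f` vanishes near `D`; since `0 ≤ (trunc N)' ≤ 1`, its Dirichlet form is at
most that of `f` (`Dform_truncFun_le`); and `μ((trunc N ∘ f)²) → μ(f²) = 1` by dominated convergence
(`tendsto_muL2_truncFun`).  By homogeneity `lam0 * μ(g²) ≤ D(g)` for every compactly supported
`g` (`lam0_mul_muL2_le`), so letting `N → ∞` gives `lam0 ≤ D(f)`.
-/

open MeasureTheory Set Filter Topology ENNReal

noncomputable section

/-- The open interval `(0, D)` in `ℝ`, where `D : ℝ≥0∞` may be infinite. -/
def ooI (D : ℝ≥0∞) : Set ℝ := {x : ℝ | 0 < x ∧ ENNReal.ofReal x < D}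

/-- The interval `[0, D)` in `ℝ`. -/
def coI (D : ℝ≥0∞) : Set ℝ := {x : ℝ | 0 ≤ x ∧ ENNReal.ofReal x < D}

/-- The interval `[0, D]` in `ℝ` (conventionally `[0, ∞)` when `D = ∞`). -/
def ccI (D : ℝ≥0∞) : Set ℝ := {x : ℝ | 0 ≤ x ∧ ENNReal.ofReal x ≤ D}

/-- `C(x) = ∫_0^x b(u)/a(u) du`. -/
def Cf (a b : ℝ → ℝ) (x : ℝ) : ℝ := ∫ u in Set.Ioo 0 x, b u / a u

/-- The measure `μ(dx) = (e^{C(x)}/a(x)) dx` on `(0, D)`. -/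
def muM (a b : ℝ → ℝ) (D : ℝ≥0∞) : Measure ℝ :=
  (volume.restrict (ooI D)).withDensity fun x => ENNReal.ofReal (Real.exp (Cf a b x) / a x)

/-- The measure `ν(dx) = e^{-C(x)} dx` on `(0, D)`. -/
def nuM (a b : ℝ → ℝ) (D : ℝ≥0∞) : Measure ℝ :=
  (volume.restrict (ooI D)).withDensity fun x => ENNReal.ofReal (Real.exp (-Cf a b x))

/-- Hypothesis (1.0): `a`, `b` Borel measurable, `a > 0` on `(0,D)`, and `b/a`, `e^C/a`
locally integrable on `[0, D]`. -/
def Hyp (a b : ℝ → ℝ) (D : ℝ≥0∞) : Prop :=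
  Measurable a ∧ Measurable b ∧ (∀ x ∈ ooI D, 0 < a x) ∧
    ∀ p : ℝ, 0 ≤ p → ENNReal.ofReal p ≤ D →
      IntegrableOn (fun u => b u / a u) (Set.Icc 0 p) ∧
      IntegrableOn (fun u => Real.exp (Cf a b u) / a u) (Set.Icc 0 p)

/-- `f ∈ C¹(0,D) ∩ C[0,D]`. -/
def C1C (D : ℝ≥0∞) (f : ℝ → ℝ) : Prop :=
  ContinuousOn f (ccI D) ∧ (∀ x ∈ ooI D, DifferentiableAt ℝ f x) ∧
    ContinuousOn (deriv f) (ooI D)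

/-- The Dirichlet form `D(f) = ∫_0^D e^{C} f'^2 dx`. -/
def Dform (a b : ℝ → ℝ) (D : ℝ≥0∞) (f : ℝ → ℝ) : ℝ≥0∞ :=
  ∫⁻ x in ooI D, ENNReal.ofReal (Real.exp (Cf a b x) * deriv f x ^ 2)

/-- `μ(f²)`. -/
def muL2 (a b : ℝ → ℝ) (D : ℝ≥0∞) (f : ℝ → ℝ) : ℝ≥0∞ :=
  ∫⁻ x, ENNReal.ofReal (f x ^ 2) ∂(muM a b D)

/-- The ND (Neumann at `0`, Dirichlet at `D`) principal eigenvalue `λ₀`, defined with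
compactly supported test functions. -/
def lam0 (a b : ℝ → ℝ) (D : ℝ≥0∞) : ℝ≥0∞ :=
  sInf {r | ∃ f : ℝ → ℝ, C1C D f ∧
    (∃ p : ℝ, 0 ≤ p ∧ ENNReal.ofReal p < D ∧ ∀ x, p < x → f x = 0) ∧
    (D ≠ ∞ → f D.toReal = 0) ∧ muL2 a b D f = 1 ∧ r = Dform a b D f}

/-- `λ̃₀`: the infimum of `D(f)` over `f ∈ C¹(0,D) ∩ C[0,D]` with `μ(f²) = 1` and
`f(D) = 0`, where `f(D) = lim_{x→D} f(x)` when `D = ∞`. -/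
def lam0til (a b : ℝ → ℝ) (D : ℝ≥0∞) : ℝ≥0∞ :=
  sInf {r | ∃ f : ℝ → ℝ, C1C D f ∧ muL2 a b D f = 1 ∧
    (D ≠ ∞ → f D.toReal = 0) ∧ (D = ∞ → Tendsto f atTop (nhds 0)) ∧
    r = Dform a b D f}

/-! ### Truncation of real values -/

/-- The truncation weight. For `N > 0` it is `0` for `|s| ≤ 1 / N`, `1` for `|s| ≥ 2 / N`, and
affine in `|s|` in between. -/
def truncWeight (N s : ℝ) : ℝ := max 0 (min 1 (N * |s| - 1))

/-- The `C¹` truncation of real values: the primitive of `truncWeight N` vanishing at `0`. -/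
def trunc (N t : ℝ) : ℝ := ∫ s in (0 : ℝ)..t, truncWeight N s

lemma truncWeight_nonneg (N s : ℝ) : 0 ≤ truncWeight N s := le_max_left _ _

lemma truncWeight_le_one (N s : ℝ) : truncWeight N s ≤ 1 :=
  max_le zero_le_one (min_le_left _ _)

lemma continuous_truncWeight (N : ℝ) : Continuous (truncWeight N) := by
  unfold truncWeight
  fun_prop

lemma hasDerivAt_trunc (N t : ℝ) : HasDerivAt (trunc N) (truncWeight N t) t :=
  intervalIntegral.integral_hasDerivAt_right
    ((continuous_truncWeight N).intervalIntegrable _ _)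
    (continuous_truncWeight N).aestronglyMeasurable.stronglyMeasurableAtFilter
    (continuous_truncWeight N).continuousAt

lemma continuous_trunc (N : ℝ) : Continuous (trunc N) :=
  continuous_iff_continuousAt.2 fun t => (hasDerivAt_trunc N t).continuousAt

lemma abs_trunc_le (N t : ℝ) : |trunc N t| ≤ |t| := by
  have h := intervalIntegral.norm_integral_le_of_norm_le_const
    (a := 0) (b := t) (f := truncWeight N) (C := 1) (fun s _ => by
      rw [Real.norm_of_nonneg (truncWeight_nonneg N s)]
      exact truncWeight_le_one N s)
  simpa [trunc] using h

lemma trunc_eq_zero {N t : ℝ} (hN : 0 ≤ N) (h : N * |t| ≤ 1) : trunc N t = 0 := by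
  have h0 : ∀ s ∈ uIcc 0 t, truncWeight N s = 0 := by
    intro s hs
    have hst : |s| ≤ |t| := by simpa using abs_sub_left_of_mem_uIcc hs
    have := mul_le_mul_of_nonneg_left hst hN
    exact max_eq_left ((min_le_right _ _).trans (by linarith))
  rw [trunc, intervalIntegral.integral_congr h0]
  simp

lemma tendsto_trunc (t : ℝ) : Tendsto (fun n : ℕ => trunc n t) atTop (𝓝 t) := by
  have h : Tendsto (fun n : ℕ => ∫ s in (0 : ℝ)..t, truncWeight n s) atTop
      (𝓝 (∫ _ in (0 : ℝ)..t, (1 : ℝ))) := by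
    refine intervalIntegral.tendsto_integral_filter_of_dominated_convergence (fun _ => 1)
      (Eventually.of_forall fun n => (continuous_truncWeight n).aestronglyMeasurable)
      (Eventually.of_forall fun n => Eventually.of_forall fun s _ => ?_)
      intervalIntegrable_const ?_
    · rw [Real.norm_of_nonneg (truncWeight_nonneg _ s)]
      exact truncWeight_le_one _ s
    · have hne : ∀ᵐ s : ℝ, s ≠ 0 := by simp [ae_iff]
      filter_upwards [hne] with s hs _
      have hlim : Tendsto (fun n : ℕ => (n : ℝ) * |s|) atTop atTop :=
        tendsto_natCast_atTop_atTop.atTop_mul_const (abs_pos.2 hs)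
      refine tendsto_const_nhds.congr' ?_
      filter_upwards [hlim.eventually_ge_atTop 2] with n hn
      rw [truncWeight, min_eq_left (by linarith), max_eq_right zero_le_one]
  simpa [trunc] using h

/-! ### Truncated test functions -/

lemma isOpen_ooI (D : ℝ≥0∞) : IsOpen (ooI D) :=
  (isOpen_lt continuous_const continuous_id).inter
    (isOpen_lt ENNReal.continuous_ofReal continuous_const)

lemma ooI_subset_ccI (D : ℝ≥0∞) : ooI D ⊆ ccI D := fun _ hx => ⟨hx.1.le, hx.2.le⟩

/-- A test function vanishing at `D` is uniformly small on a left neighbourhood of `D`. -/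
lemma exists_small_near_end {D : ℝ≥0∞} (hD : 0 < D) {f : ℝ → ℝ} (hf : C1C D f)
    (h1 : D ≠ ∞ → f D.toReal = 0) (h2 : D = ∞ → Tendsto f atTop (𝓝 0)) {ε : ℝ} (hε : 0 < ε) :
    ∃ p : ℝ, 0 ≤ p ∧ ENNReal.ofReal p < D ∧ ∀ x ∈ ccI D, p < x → |f x| ≤ ε := by
  by_cases hDt : D = ∞
  · obtain ⟨p, hp⟩ := Metric.tendsto_atTop.1 (h2 hDt) ε hε
    refine ⟨max p 0, le_max_right _ _, hDt ▸ ENNReal.ofReal_lt_top, fun x _ hx => ?_⟩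
    simpa using (hp x ((le_max_left _ _).trans hx.le)).le
  · have hd : 0 < D.toReal := ENNReal.toReal_pos hD.ne' hDt
    have hmem : D.toReal ∈ ccI D := ⟨hd.le, by rw [ENNReal.ofReal_toReal hDt]⟩
    obtain ⟨δ, hδ, hfδ⟩ := Metric.continuousOn_iff.1 hf.1 _ hmem ε hε
    refine ⟨max (D.toReal - δ) 0, le_max_right _ _, ?_, fun x hx hpx => ?_⟩
    · rw [ENNReal.ofReal_lt_iff_lt_toReal (le_max_right _ _) hDt]
      exact max_lt (by linarith) hd
    · have hxD : x ≤ D.toReal := (ENNReal.ofReal_le_iff_le_toReal hDt).1 hx.2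
      have hx' : D.toReal - δ < x := (le_max_left _ _).trans_lt hpx
      have := hfδ x hx (by rw [Real.dist_eq, abs_lt]; constructor <;> linarith)
      rw [h1 hDt] at this
      simpa using this.le

/-- The truncation `trunc N ∘ f`, set to `0` off `[0, D]`: the values of a test function outside
`[0, D]` are unconstrained, whereas those of a compactly supported one must vanish there. -/
def truncFun (D : ℝ≥0∞) (f : ℝ → ℝ) (N : ℝ) : ℝ → ℝ := (ccI D).indicator (trunc N ∘ f)

lemma truncFun_of_mem {D : ℝ≥0∞} {f : ℝ → ℝ} {N x : ℝ} (hx : x ∈ ccI D) :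
    truncFun D f N x = trunc N (f x) := indicator_of_mem hx _

lemma hasDerivAt_truncFun {D : ℝ≥0∞} {f : ℝ → ℝ} (hf : C1C D f) (N : ℝ) {x : ℝ}
    (hx : x ∈ ooI D) :
    HasDerivAt (truncFun D f N) (truncWeight N (f x) * deriv f x) x := by
  refine ((hasDerivAt_trunc N (f x)).comp x (hf.2.1 x hx).hasDerivAt).congr_of_eventuallyEq ?_
  filter_upwards [(isOpen_ooI D).mem_nhds hx] with y hy
  exact truncFun_of_mem (ooI_subset_ccI D hy)

lemma C1C_truncFun {D : ℝ≥0∞} {f : ℝ → ℝ} (hf : C1C D f) (N : ℝ) : C1C D (truncFun D f N) := by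
  refine ⟨?_, fun x hx => (hasDerivAt_truncFun hf N hx).differentiableAt, ?_⟩
  · exact ((continuous_trunc N).comp_continuousOn hf.1).congr fun x hx => truncFun_of_mem hx
  · refine ContinuousOn.congr ?_ fun x hx => (hasDerivAt_truncFun hf N hx).deriv
    exact ((continuous_truncWeight N).comp_continuousOn
      (hf.1.mono (ooI_subset_ccI D))).mul hf.2.2

lemma Dform_truncFun_le (a b : ℝ → ℝ) {D : ℝ≥0∞} {f : ℝ → ℝ} (hf : C1C D f) (N : ℝ) :
    Dform a b D (truncFun D f N) ≤ Dform a b D f := by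
  refine setLIntegral_mono' (isOpen_ooI D).measurableSet fun x hx => ?_
  rw [(hasDerivAt_truncFun hf N hx).deriv, mul_pow]
  have h1 : truncWeight N (f x) ^ 2 ≤ 1 :=
    pow_le_one₀ (truncWeight_nonneg _ _) (truncWeight_le_one _ _)
  exact ENNReal.ofReal_le_ofReal (mul_le_mul_of_nonneg_left
    (mul_le_of_le_one_left (sq_nonneg _) h1) (Real.exp_pos _).le)

lemma truncFun_compact_support {D : ℝ≥0∞} (hD : 0 < D) {f : ℝ → ℝ} (hf : C1C D f)
    (h1 : D ≠ ∞ → f D.toReal = 0) (h2 : D = ∞ → Tendsto f atTop (𝓝 0)) {N : ℝ} (hN : 0 ≤ N) :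
    ∃ p : ℝ, 0 ≤ p ∧ ENNReal.ofReal p < D ∧ ∀ x, p < x → truncFun D f N x = 0 := by
  -- `N + 1` rather than `N`, so that the threshold makes sense for `N = 0`.
  have hN1 : 0 < N + 1 := by linarith
  obtain ⟨p, hp0, hpD, hp⟩ := exists_small_near_end hD hf h1 h2 (inv_pos.2 hN1)
  refine ⟨p, hp0, hpD, fun x hx => ?_⟩
  by_cases hxD : x ∈ ccI D
  · rw [truncFun_of_mem hxD]
    refine trunc_eq_zero hN ?_
    calc N * |f x| ≤ (N + 1) * (N + 1)⁻¹ :=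
          mul_le_mul (by linarith) (hp x hxD hx) (abs_nonneg _) hN1.le
      _ = 1 := mul_inv_cancel₀ hN1.ne'
  · exact indicator_of_notMem hxD _

/-! ### Convergence of `μ(f²)` and normalisation -/

lemma muM_absolutelyContinuous (a b : ℝ → ℝ) (D : ℝ≥0∞) :
    muM a b D ≪ volume.restrict (ooI D) :=
  withDensity_absolutelyContinuous _ _

lemma ae_muM_mem (a b : ℝ → ℝ) (D : ℝ≥0∞) : ∀ᵐ x ∂(muM a b D), x ∈ ooI D :=
  (muM_absolutelyContinuous a b D).ae_le (ae_restrict_mem (isOpen_ooI D).measurableSet)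

lemma aemeasurable_sq (a b : ℝ → ℝ) {D : ℝ≥0∞} {f : ℝ → ℝ} (hf : C1C D f) :
    AEMeasurable (fun x => ENNReal.ofReal (f x ^ 2)) (muM a b D) := by
  have h : AEMeasurable f (volume.restrict (ooI D)) :=
    (hf.1.mono (ooI_subset_ccI D)).aemeasurable (isOpen_ooI D).measurableSet
  exact ((h.mono_ac (muM_absolutelyContinuous a b D)).pow_const 2).ennreal_ofReal

lemma truncFun_sq_le {D : ℝ≥0∞} {f : ℝ → ℝ} {N x : ℝ} (hx : x ∈ ooI D) :
    ENNReal.ofReal (truncFun D f N x ^ 2) ≤ ENNReal.ofReal (f x ^ 2) := by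
  rw [truncFun_of_mem (ooI_subset_ccI D hx)]
  exact ENNReal.ofReal_le_ofReal (sq_le_sq.2 (abs_trunc_le _ _))

lemma muL2_truncFun_le (a b : ℝ → ℝ) (D : ℝ≥0∞) (f : ℝ → ℝ) (N : ℝ) :
    muL2 a b D (truncFun D f N) ≤ muL2 a b D f :=
  lintegral_mono_ae ((ae_muM_mem a b D).mono fun _ hx => truncFun_sq_le hx)

lemma tendsto_muL2_truncFun (a b : ℝ → ℝ) {D : ℝ≥0∞} {f : ℝ → ℝ} (hf : C1C D f)
    (hfin : muL2 a b D f ≠ ∞) :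
    Tendsto (fun n : ℕ => muL2 a b D (truncFun D f n)) atTop (𝓝 (muL2 a b D f)) := by
  refine tendsto_lintegral_of_dominated_convergence' (fun x => ENNReal.ofReal (f x ^ 2))
    (fun n => aemeasurable_sq a b (C1C_truncFun hf n))
    (fun n => (ae_muM_mem a b D).mono fun _ hx => truncFun_sq_le hx) hfin ?_
  filter_upwards [ae_muM_mem a b D] with x hx
  simp only [truncFun_of_mem (ooI_subset_ccI D hx)]
  exact ENNReal.tendsto_ofReal ((tendsto_trunc (f x)).pow 2)

/-- Rayleigh quotient form of the definition of `lam0`, obtained by normalising `g`. -/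
lemma lam0_mul_muL2_le (a b : ℝ → ℝ) {D : ℝ≥0∞} {g : ℝ → ℝ} (hg : C1C D g)
    (hsupp : ∃ p : ℝ, 0 ≤ p ∧ ENNReal.ofReal p < D ∧ ∀ x, p < x → g x = 0)
    (hgD : D ≠ ∞ → g D.toReal = 0) (hfin : muL2 a b D g ≠ ∞) :
    lam0 a b D * muL2 a b D g ≤ Dform a b D g := by
  by_cases h0 : muL2 a b D g = 0
  · simp [h0]
  have hpos : 0 < (muL2 a b D g).toReal := ENNReal.toReal_pos h0 hfin
  set c : ℝ := √((muL2 a b D g).toReal⁻¹) with hc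
  have hc2 : ENNReal.ofReal (c ^ 2) = (muL2 a b D g)⁻¹ := by
    rw [hc, Real.sq_sqrt (inv_nonneg.2 hpos.le), ENNReal.ofReal_inv_of_pos hpos,
      ENNReal.ofReal_toReal hfin]
  have hderiv : ∀ x, deriv (fun y => c * g y) x = c * deriv g x := fun x =>
    deriv_const_mul_field c
  have hmu : muL2 a b D (fun x => c * g x) = 1 := by
    have : muL2 a b D (fun x => c * g x) = ENNReal.ofReal (c ^ 2) * muL2 a b D g := by
      unfold muL2
      rw [← lintegral_const_mul' _ _ ENNReal.ofReal_ne_top]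
      simp_rw [mul_pow, ENNReal.ofReal_mul (sq_nonneg c)]
    rw [this, hc2, ENNReal.inv_mul_cancel h0 hfin]
  have hDf : Dform a b D (fun x => c * g x) = (muL2 a b D g)⁻¹ * Dform a b D g := by
    rw [← hc2]
    unfold Dform
    rw [← lintegral_const_mul' _ _ ENNReal.ofReal_ne_top]
    simp_rw [hderiv, mul_pow, ← ENNReal.ofReal_mul (sq_nonneg c), mul_left_comm]
  have hle : lam0 a b D ≤ (muL2 a b D g)⁻¹ * Dform a b D g := by
    refine sInf_le ⟨fun x => c * g x, ⟨hg.1.const_mul c, fun x hx => (hg.2.1 x hx).const_mul c,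
      ?_⟩, ?_, fun h => by simp [hgD h], hmu, hDf.symm⟩
    · exact (hg.2.2.const_mul c).congr fun x _ => hderiv x
    · obtain ⟨p, hp0, hpD, hp⟩ := hsupp
      exact ⟨p, hp0, hpD, fun x hx => by simp [hp x hx]⟩
  calc lam0 a b D * muL2 a b D g
      ≤ ((muL2 a b D g)⁻¹ * Dform a b D g) * muL2 a b D g := by gcongr
    _ = Dform a b D g := by
      rw [mul_comm, ← mul_assoc, ENNReal.mul_inv_cancel h0 hfin, one_mul]

/-- Proposition 2.2(1): the ND principal eigenvalue defined via compactly supported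
test functions coincides with `λ̃₀`. -/
theorem nd_lam0_eq_lam0til
    (a b : ℝ → ℝ) (D : ℝ≥0∞) (hD : 0 < D) (hyp : Hyp a b D) :
    lam0 a b D = lam0til a b D := by
  apply le_antisymm
  · refine le_sInf ?_
    rintro r ⟨f, hf, hmu, h1, h2, rfl⟩
    have hfin : muL2 a b D f ≠ ∞ := by simp [hmu]
    have hle : ∀ n : ℕ, lam0 a b D * muL2 a b D (truncFun D f n) ≤ Dform a b D f := by
      intro n
      obtain ⟨p, hp0, hpD, hp⟩ := truncFun_compact_support hD hf h1 h2 n.cast_nonneg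
      refine (lam0_mul_muL2_le a b (C1C_truncFun hf n) ⟨p, hp0, hpD, hp⟩ (fun hDt => ?_)
        (ne_top_of_le_ne_top hfin (muL2_truncFun_le a b D f n))).trans (Dform_truncFun_le a b hf n)
      exact hp _ ((ENNReal.ofReal_lt_iff_lt_toReal hp0 hDt).1 hpD)
    have hlim := ENNReal.Tendsto.const_mul (a := lam0 a b D) (tendsto_muL2_truncFun a b hf hfin)
      (Or.inl (by simp [hmu]))
    rw [hmu, mul_one] at hlim
    exact le_of_tendsto' hlim hle
  · refine le_sInf ?_
    rintro r ⟨f, hf, ⟨p, -, -, hp⟩, h1, hmu, rfl⟩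
    refine sInf_le ⟨f, hf, hmu, h1, fun _ => ?_, rfl⟩
    refine tendsto_const_nhds.congr' ?_
    filter_upwards [eventually_gt_atTop p] with x hx
    exact (hp x hx).symm
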